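/- Under the standing hypotheses, the parametrization F(s,t) = r(s) + t·e(s) of the ruled surface satisfies, for all (s,t) ∈ I × ℝ: (∂F/∂s)(s,t) × (∂F/∂t)(s,t) = κ₁(s)·n₀(s) − (t + ⟪r'(s), e'(s)⟫)·t₀(s). -/

import Mathlib

noncomputable section
open scoped RealInnerProductSpace

/-- Euclidean 3-space `ℝ³`. -/
abbrev E3 : Type := EuclideanSpace ℝ (Fin 3)

/-- The cross product on `E3`. -/
def cross (u v : E3) : E3 :=
  (WithLp.equiv 2 (Fin 3 → ℝ)).symm
    ![u 1 * v 2 - u 2 * v 1, u 2 * v 0 - u 0 * v 2, u 0 * v 1 - u 1 * v 0]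

/-- Determinant of the 3×3 matrix with columns `u`, `v`, `w`. -/
def det3 (u v w : E3) : ℝ :=
  Matrix.det !![u 0, v 0, w 0; u 1, v 1, w 1; u 2, v 2, w 2]

namespace Ruled

/-- The director curve `e = v₀`. -/
def e (v₀ : ℝ → E3) : ℝ → E3 := v₀

/-- The base curve `r = v₀ × v₁`. -/
def r (v₀ v₁ : ℝ → E3) : ℝ → E3 := fun s => cross (v₀ s) (v₁ s)

/-- The parametrization `F(s,t) = r(s) + t • e(s)` of the ruled surface. -/
def F (v₀ v₁ : ℝ → E3) (s t : ℝ) : E3 := r v₀ v₁ s + t • v₀ s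

/-- `n₀ = v₀'`. -/
def n₀ (v₀ : ℝ → E3) : ℝ → E3 := fun s => deriv v₀ s

/-- `κ₁ = ⟪v₀', v₁'⟫`, the ε-part of the dual curvature. -/
def κ₁ (v₀ v₁ : ℝ → E3) : ℝ → ℝ := fun s => ⟪deriv v₀ s, deriv v₁ s⟫

/-- `n₁ = v₁' - κ₁ • v₀'`. -/
def n₁ (v₀ v₁ : ℝ → E3) : ℝ → E3 := fun s => deriv v₁ s - κ₁ v₀ v₁ s • deriv v₀ s

/-- `t₀ = v₀ × n₀`. -/
def t₀ (v₀ : ℝ → E3) : ℝ → E3 := fun s => cross (v₀ s) (n₀ v₀ s)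

/-- `t₁ = v₀ × n₁ + v₁ × n₀`. -/
def t₁ (v₀ v₁ : ℝ → E3) : ℝ → E3 :=
  fun s => cross (v₀ s) (n₁ v₀ v₁ s) + cross (v₁ s) (n₀ v₀ s)

/-- `τ₀ = ⟪n₀', t₀⟫`, the real part of the dual torsion. -/
def τ₀ (v₀ : ℝ → E3) : ℝ → ℝ := fun s => ⟪deriv (n₀ v₀) s, t₀ v₀ s⟫

/-- `τ₁ = ⟪n₀', t₁⟫ + ⟪n₁', t₀⟫`, the ε-part of the dual torsion. -/
def τ₁ (v₀ v₁ : ℝ → E3) : ℝ → ℝ :=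
  fun s => ⟪deriv (n₀ v₀) s, t₁ v₀ v₁ s⟫ + ⟪deriv (n₁ v₀ v₁) s, t₀ v₀ s⟫

/-- The striction curve `σ(s) = r(s) - ⟪r'(s), e'(s)⟫ • e(s)`. -/
def strict (v₀ v₁ : ℝ → E3) : ℝ → E3 :=
  fun s => r v₀ v₁ s - ⟪deriv (r v₀ v₁) s, deriv (e v₀) s⟫ • e v₀ s

end Ruled

open Ruled

theorem inner_coord (u v : E3) : ⟪u, v⟫ = u 0 * v 0 + u 1 * v 1 + u 2 * v 2 := by
  simp only [PiLp.inner_apply, Fin.sum_univ_three, RCLike.inner_apply, conj_trivial]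
  ring

theorem cross_0 (u v : E3) : cross u v 0 = u 1 * v 2 - u 2 * v 1 := rfl
theorem cross_1 (u v : E3) : cross u v 1 = u 2 * v 0 - u 0 * v 2 := rfl
theorem cross_2 (u v : E3) : cross u v 2 = u 0 * v 1 - u 1 * v 0 := rfl

theorem coord_deriv {f : ℝ → E3} {f' : E3} {s : ℝ} (h : HasDerivAt f f' s) (i : Fin 3) :
    HasDerivAt (fun u => f u i) (f' i) s :=
  (EuclideanSpace.proj (𝕜 := ℝ) i : E3 →L[ℝ] ℝ).hasFDerivAt.comp_hasDerivAt s h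

theorem cross_deriv {f g : ℝ → E3} {f' g' : E3} {s : ℝ} (hf : HasDerivAt f f' s)
    (hg : HasDerivAt g g' s) :
    HasDerivAt (fun u => cross (f u) (g u)) (cross f' (g s) + cross (f s) g') s := by
  have F := coord_deriv hf
  have G := coord_deriv hg
  rw [hasDerivAt_iff_hasFDerivAt, ← hasFDerivWithinAt_univ, hasFDerivWithinAt_piLp]
  intro i
  rw [hasFDerivWithinAt_univ]
  refine HasDerivAt.hasFDerivAt (f' := (cross f' (g s) + cross (f s) g') i) ?_ |>.congr_fderiv ?_
  swap
  · ext; simp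
  fin_cases i
  · refine (((F 1).mul (G 2)).sub ((F 2).mul (G 1))).congr_deriv ?_
    simp only [Fin.zero_eta, PiLp.add_apply, cross_0]
    ring
  · refine (((F 2).mul (G 0)).sub ((F 0).mul (G 2))).congr_deriv ?_
    simp only [Fin.mk_one, PiLp.add_apply, cross_1]
    ring
  · refine (((F 0).mul (G 1)).sub ((F 1).mul (G 0))).congr_deriv ?_
    simp only [Fin.reduceFinMk, PiLp.add_apply, cross_2]
    ring

theorem diag_id {a b c x y z : ℝ} (hp : a * a + b * b + c * c = 1)
    (hq : x * x + y * y + z * z = 1) (hpq : a * x + b * y + c * z = 0) :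
    (b * z - c * y) * (b * z - c * y) = 1 - a * a - x * x := by
  have h1 : b * b + c * c = 1 - a * a := by linarith
  have h2 : y * y + z * z = 1 - x * x := by linarith
  have h3 : b * y + c * z = - (a * x) := by linarith
  have : (b * z - c * y) * (b * z - c * y) =
    (b * b + c * c) * (y * y + z * z) - (b * y + c * z) * (b * y + c * z) := by ring
  rw [this, h1, h2, h3]; ring

theorem off_id {a b c x y z : ℝ} (hp : a * a + b * b + c * c = 1)
    (hq : x * x + y * y + z * z = 1) (hpq : a * x + b * y + c * z = 0) :
    (b * z - c * y) * (c * x - a * z) = - (a * b) - x * y := by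
  linear_combination (-x * y) * hp + (-a*b) * hq + (a * y + b * x) * hpq

theorem alg (p q w z : E3) (hp : ⟪p, p⟫ = 1) (hq : ⟪q, q⟫ = 1) (hpq : ⟪p, q⟫ = 0)
    (hpw : ⟪p, w⟫ = 0) (t : ℝ) :
    cross (cross q w + cross p z + t • q) p =
      ⟪q, z⟫ • q - (t + ⟪cross q w + cross p z, q⟫) • cross p q := by
  simp only [inner_coord, PiLp.add_apply, cross_0, cross_1, cross_2] at *
  have d0 := diag_id hp hq hpq
  have o0 := off_id hp hq hpq
  have hp1 : p 1 * p 1 + p 2 * p 2 + p 0 * p 0 = 1 := by linarith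
  have hq1 : q 1 * q 1 + q 2 * q 2 + q 0 * q 0 = 1 := by linarith
  have hpq1 : p 1 * q 1 + p 2 * q 2 + p 0 * q 0 = 0 := by linarith
  have d1 := diag_id hp1 hq1 hpq1
  have o1 := off_id hp1 hq1 hpq1
  have hp2 : p 2 * p 2 + p 0 * p 0 + p 1 * p 1 = 1 := by linarith
  have hq2 : q 2 * q 2 + q 0 * q 0 + q 1 * q 1 = 1 := by linarith
  have hpq2 : p 2 * q 2 + p 0 * q 0 + p 1 * q 1 = 0 := by linarith
  have d2 := diag_id hp2 hq2 hpq2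
  have o2 := off_id hp2 hq2 hpq2
  ext i
  fin_cases i
  · simp only [Fin.zero_eta, PiLp.add_apply, PiLp.sub_apply, PiLp.smul_apply, smul_eq_mul,
      cross_0, cross_1, cross_2]
    linear_combination w 0 * hpq - q 0 * hpw + z 0 * hp - z 0 * d0 - z 1 * o0 - z 2 * o2
  · simp only [Fin.mk_one, PiLp.add_apply, PiLp.sub_apply, PiLp.smul_apply, smul_eq_mul,
      cross_0, cross_1, cross_2]
    linear_combination w 1 * hpq - q 1 * hpw + z 1 * hp - z 1 * d1 - z 0 * o0 - z 2 * o1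
  · simp only [Fin.reduceFinMk, PiLp.add_apply, PiLp.sub_apply, PiLp.smul_apply, smul_eq_mul,
      cross_0, cross_1, cross_2]
    linear_combination w 2 * hpq - q 2 * hpw + z 2 * hp - z 2 * d2 - z 1 * o1 - z 0 * o2

/-- For `F(s,t) = r(s) + t • e(s)` one has
`(∂F/∂s) × (∂F/∂t) = κ₁(s) • n₀(s) - (t + ⟪r'(s), e'(s)⟫) • t₀(s)`. -/
theorem cross_of_partials
    (I : Set ℝ) (v₀ v₁ : ℝ → E3)
    (hI : IsOpen I) (hI' : I.OrdConnected)
    (hv₀ : ContDiffOn ℝ (⊤ : ℕ∞) v₀ I) (hv₁ : ContDiffOn ℝ (⊤ : ℕ∞) v₁ I)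
    (hunit : ∀ s ∈ I, ‖v₀ s‖ = 1) (horth : ∀ s ∈ I, ⟪v₀ s, v₁ s⟫ = 0)
    (harc : ∀ s ∈ I, ‖deriv v₀ s‖ = 1) :
    ∀ s ∈ I, ∀ t : ℝ,
      cross (deriv (fun u => F v₀ v₁ u t) s) (deriv (fun u => F v₀ v₁ s u) t) =
        κ₁ v₀ v₁ s • n₀ v₀ s - (t + ⟪deriv (r v₀ v₁) s, deriv (e v₀) s⟫) • t₀ v₀ s := by
  intro s hs t
  have hn := hI.mem_nhds hs
  have D0 : HasDerivAt v₀ (deriv v₀ s) s :=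
    ((hv₀.contDiffAt hn).differentiableAt (by simp)).hasDerivAt
  have D1 : HasDerivAt v₁ (deriv v₁ s) s :=
    ((hv₁.contDiffAt hn).differentiableAt (by simp)).hasDerivAt
  have Dr : HasDerivAt (r v₀ v₁) (cross (deriv v₀ s) (v₁ s) + cross (v₀ s) (deriv v₁ s)) s :=
    cross_deriv D0 D1
  have Fs : HasDerivAt (fun u => F v₀ v₁ u t)
      (cross (deriv v₀ s) (v₁ s) + cross (v₀ s) (deriv v₁ s) + t • deriv v₀ s) s :=
    Dr.add (D0.const_smul t)
  have Ft : HasDerivAt (fun u => F v₀ v₁ s u) (v₀ s) t := by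
    have := ((hasDerivAt_id t).smul_const (v₀ s)).const_add (r v₀ v₁ s)
    rw [one_smul] at this
    exact this
  have hp : ⟪v₀ s, v₀ s⟫ = 1 := by rw [real_inner_self_eq_norm_sq, hunit s hs]; norm_num
  have hq : ⟪deriv v₀ s, deriv v₀ s⟫ = 1 := by
    rw [real_inner_self_eq_norm_sq, harc s hs]; norm_num
  have hpq : ⟪v₀ s, deriv v₀ s⟫ = 0 := by
    have h1 := D0.inner ℝ D0
    have h2 : (fun u => ⟪v₀ u, v₀ u⟫) =ᶠ[nhds s] fun _ => (1 : ℝ) := by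
      filter_upwards [hn] with u hu
      rw [real_inner_self_eq_norm_sq, hunit u hu]; norm_num
    have h3 := h1.unique ((hasDerivAt_const s (1 : ℝ)).congr_of_eventuallyEq h2)
    rw [real_inner_comm (v₀ s) (deriv v₀ s)] at h3
    linarith [real_inner_comm (v₀ s) (deriv v₀ s)]
  rw [Fs.deriv, Ft.deriv, Dr.deriv]
  exact alg _ _ _ _ hp hq hpq (horth s hs) t
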